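/- Let G be a finite group generated by two distinct non-identity elements g1 and g2. Then there exists a finite simple graph Γ on exactly 6·|G| vertices that is cubic (3-regular) and whose automorphism group is isomorphic to G. -/

import Mathlib

namespace CubicSix

inductive T where
  | x | u | v | a | b | c
  deriving DecidableEq

instance : Fintype T := ⟨{.x, .u, .v, .a, .b, .c}, by intro t; cases t <;> simp⟩

/-- Adjacency between a vertex of type `i` over `g` and one of type `j` over `h`. -/
def adj {G : Type*} [Group G] (g1 g2 : G) : T × G → T × G → Prop
  | (.x, g), (.u, h) => h = g
  | (.u, g), (.x, h) => h = g
  | (.x, g), (.v, h) => h = g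
  | (.v, g), (.x, h) => h = g
  | (.u, g), (.v, h) => h = g
  | (.v, g), (.u, h) => h = g
  | (.u, g), (.a, h) => h = g
  | (.a, g), (.u, h) => h = g
  | (.a, g), (.b, h) => h = g
  | (.b, g), (.a, h) => h = g
  | (.v, g), (.c, h) => h = g
  | (.c, g), (.v, h) => h = g
  | (.x, g), (.a, h) => h = g * g1
  | (.a, g), (.x, h) => h = g * g1⁻¹
  | (.c, g), (.b, h) => h = g ∨ h = g * g2
  | (.b, g), (.c, h) => h = g ∨ h = g * g2⁻¹
  | _, _ => False

def gr {G : Type*} [Group G] (g1 g2 : G) : SimpleGraph (T × G) where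
  Adj := adj g1 g2
  symm := ⟨by
    rintro ⟨i, g⟩ ⟨j, h⟩ H
    cases i <;> cases j <;> simp only [adj] at H ⊢ <;>
      first
      | exact H.symm
      | (subst H; simp)
      | (rcases H with H | H <;> subst H <;> simp)⟩
  loopless := ⟨by
    rintro ⟨i, g⟩
    cases i <;> simp [adj]⟩

section
variable {G : Type*} [Group G] {g1 g2 : G}

lemma adj_x (g : G) (q : T × G) :
    (gr g1 g2).Adj (.x, g) q ↔ q = (.u, g) ∨ q = (.v, g) ∨ q = (.a, g * g1) := by
  obtain ⟨j, h⟩ := q; cases j <;> simp [gr, adj]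
lemma adj_u (g : G) (q : T × G) :
    (gr g1 g2).Adj (.u, g) q ↔ q = (.x, g) ∨ q = (.v, g) ∨ q = (.a, g) := by
  obtain ⟨j, h⟩ := q; cases j <;> simp [gr, adj]
lemma adj_v (g : G) (q : T × G) :
    (gr g1 g2).Adj (.v, g) q ↔ q = (.x, g) ∨ q = (.u, g) ∨ q = (.c, g) := by
  obtain ⟨j, h⟩ := q; cases j <;> simp [gr, adj]
lemma adj_a (g : G) (q : T × G) :
    (gr g1 g2).Adj (.a, g) q ↔ q = (.u, g) ∨ q = (.b, g) ∨ q = (.x, g * g1⁻¹) := by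
  obtain ⟨j, h⟩ := q; cases j <;> simp [gr, adj]
lemma adj_b (g : G) (q : T × G) :
    (gr g1 g2).Adj (.b, g) q ↔ q = (.a, g) ∨ q = (.c, g) ∨ q = (.c, g * g2⁻¹) := by
  obtain ⟨j, h⟩ := q; cases j <;> simp [gr, adj]
lemma adj_c (g : G) (q : T × G) :
    (gr g1 g2).Adj (.c, g) q ↔ q = (.v, g) ∨ q = (.b, g) ∨ q = (.b, g * g2) := by
  obtain ⟨j, h⟩ := q; cases j <;> simp [gr, adj]

lemma ncard_nbr (h2 : g2 ≠ 1) (p : T × G) : ((gr g1 g2).neighborSet p).ncard = 3 := by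
  have key : ∀ q r s : T × G, q ≠ r → q ≠ s → r ≠ s →
      (∀ t, (gr g1 g2).Adj p t ↔ t = q ∨ t = r ∨ t = s) →
      ((gr g1 g2).neighborSet p).ncard = 3 := by
    intro q r s h1 h2 h3 H
    rw [Set.ncard_eq_three]
    exact ⟨q, r, s, h1, h2, h3, by ext t; simp [H]⟩
  obtain ⟨i, g⟩ := p
  cases i
  · exact key _ _ _ (by simp) (by simp) (by simp) (adj_x g)
  · exact key _ _ _ (by simp) (by simp) (by simp) (adj_u g)
  · exact key _ _ _ (by simp) (by simp) (by simp) (adj_v g)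
  · exact key _ _ _ (by simp) (by simp) (by simp) (adj_a g)
  · exact key _ _ _ (by simp) (by simp) (by simp [h2]) (adj_b g)
  · exact key _ _ _ (by simp) (by simp) (by simp [h2]) (adj_c g)
end

section inv
variable {V : Type*} (Γ : SimpleGraph V)

def Tri (p : V) : Prop := ∃ q r, Γ.Adj p q ∧ Γ.Adj q r ∧ Γ.Adj r p
def PA (p : V) : Prop := ¬ Tri Γ p ∧ ∃ q r, q ≠ r ∧ Γ.Adj p q ∧ Γ.Adj p r ∧ Tri Γ q ∧ Tri Γ r
def PB (p : V) : Prop := ¬ Tri Γ p ∧ ∀ q, Γ.Adj p q → ¬ Tri Γ q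
def PC (p : V) : Prop := ¬ Tri Γ p ∧ ¬ PA Γ p ∧ ¬ PB Γ p
def PV (p : V) : Prop := Tri Γ p ∧ ∃ q, Γ.Adj p q ∧ PC Γ q
def PU (p : V) : Prop := Tri Γ p ∧ ¬ PV Γ p ∧ ∃ a b c d, Γ.Adj p a ∧ PA Γ a ∧
  Γ.Adj a b ∧ PB Γ b ∧ Γ.Adj b c ∧ PC Γ c ∧ Γ.Adj c d ∧ PV Γ d ∧ Γ.Adj d p

variable {Γ} (φ : Γ ≃g Γ)

lemma ex_iff {P Q : V → Prop} (h : ∀ a, P (φ a) ↔ Q a) : (∃ a, P a) ↔ ∃ a, Q a :=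
  (Equiv.exists_congr φ.toEquiv fun a => (h a).symm).symm
lemma tri_iff (p : V) : Tri Γ (φ p) ↔ Tri Γ p := by
  refine ex_iff φ fun q => ex_iff φ fun r => ?_
  simp only [φ.map_adj_iff]
lemma pa_iff (p : V) : PA Γ (φ p) ↔ PA Γ p := by
  refine and_congr (not_congr (tri_iff φ p)) (ex_iff φ fun q => ex_iff φ fun r => ?_)
  simp only [φ.map_adj_iff, tri_iff, φ.injective.ne_iff]
lemma pb_iff (p : V) : PB Γ (φ p) ↔ PB Γ p := by
  refine and_congr (not_congr (tri_iff φ p))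
    (Equiv.forall_congr φ.toEquiv fun q => Iff.symm ?_).symm
  change (Γ.Adj (φ p) (φ q) → ¬ Tri Γ (φ q)) ↔ _
  simp only [φ.map_adj_iff, tri_iff]
lemma pc_iff (p : V) : PC Γ (φ p) ↔ PC Γ p := by
  simp only [PC, pa_iff, pb_iff, tri_iff]
lemma pv_iff (p : V) : PV Γ (φ p) ↔ PV Γ p := by
  refine and_congr (tri_iff φ p) (ex_iff φ fun q => ?_)
  simp only [φ.map_adj_iff, pc_iff]
lemma pu_iff (p : V) : PU Γ (φ p) ↔ PU Γ p := by
  refine and_congr (tri_iff φ p) (and_congr (not_congr (pv_iff φ p))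
    (ex_iff φ fun a => ex_iff φ fun b => ex_iff φ fun c => ex_iff φ fun d => ?_))
  simp only [φ.map_adj_iff, pa_iff, pb_iff, pc_iff, pv_iff]
end inv

section
variable {G : Type*} [Group G] {g1 g2 : G}

lemma tri_char (h1 : g1 ≠ 1) (p : T × G) :
    Tri (gr g1 g2) p ↔ p.1 = .x ∨ p.1 = .u ∨ p.1 = .v := by
  obtain ⟨i, g⟩ := p
  cases i <;>
    simp [Tri, adj_x, adj_u, adj_v, adj_a, adj_b, adj_c, or_and_right, exists_or, h1]

lemma pa_char (h1 : g1 ≠ 1) (p : T × G) : PA (gr g1 g2) p ↔ p.1 = .a := by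
  obtain ⟨i, g⟩ := p
  cases i <;> 
    simp [PA, tri_char h1, adj_x, adj_u, adj_v, adj_a, adj_b, adj_c]
  · exact ⟨.u, g, .x, g * g1⁻¹, by simp⟩
  · grind
  · grind

lemma pb_char (h1 : g1 ≠ 1) (p : T × G) : PB (gr g1 g2) p ↔ p.1 = .b := by
  obtain ⟨i, g⟩ := p
  cases i <;> 
    simp [PB, tri_char h1, adj_x, adj_u, adj_v, adj_a, adj_b, adj_c]
  all_goals grind

lemma pc_char (h1 : g1 ≠ 1) (p : T × G) : PC (gr g1 g2) p ↔ p.1 = .c := by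
  obtain ⟨i, g⟩ := p
  cases i <;> simp [PC, tri_char h1, pa_char h1, pb_char h1]

lemma pv_char (h1 : g1 ≠ 1) (p : T × G) : PV (gr g1 g2) p ↔ p.1 = .v := by
  obtain ⟨i, g⟩ := p
  cases i <;>
    simp [PV, tri_char h1, pc_char h1, adj_x, adj_u, adj_v]

lemma pu_char (hne : g1 ≠ g2) (h1 : g1 ≠ 1) (p : T × G) : PU (gr g1 g2) p ↔ p.1 = .u := by
  constructor
  · rintro ⟨ht, hv, ⟨i1, a⟩, ⟨i2, b⟩, ⟨i3, c⟩, ⟨i4, d⟩, H⟩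
    simp only [tri_char h1, pa_char h1, pb_char h1, pc_char h1, pv_char h1] at *
    obtain ⟨i, g⟩ := p
    obtain ⟨e1, rfl, e2, rfl, e3, rfl, e4, rfl, e5⟩ := H
    cases i <;> simp_all
    simp only [adj_x, adj_u, adj_v, adj_a, adj_b, adj_c] at *
    simp at e1 e2 e3 e4 e5
    subst e5; subst e4; subst e1; subst e2
    rcases e3 with e3 | e3
    · exact h1 (by simpa using e3.symm)
    · apply hne
      have : g * g1 = g * g2 := by rw [eq_mul_inv_iff_mul_eq] at e3; exact e3.symm
      simpa using this
  · obtain ⟨i, g⟩ := p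
    rintro h
    simp only at h
    subst h
    refine ⟨by simp [tri_char h1], by simp [pv_char h1], (.a, g), (.b, g), (.c, g), (.v, g), ?_⟩
    simp [pa_char h1, pb_char h1, pc_char h1, pv_char h1, adj_u, adj_v, adj_a, adj_b, adj_c]

lemma type_eq (hne : g1 ≠ g2) (h1 : g1 ≠ 1) (φ : gr g1 g2 ≃g gr g1 g2) (p : T × G) :
    (φ p).1 = p.1 := by
  have e0 := tri_iff φ p
  have e1 := pa_iff φ p
  have e2 := pb_iff φ p
  have e3 := pc_iff φ p
  have e4 := pv_iff φ p
  have e5 := pu_iff φ p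
  simp only [tri_char h1, pa_char h1, pb_char h1, pc_char h1, pv_char h1, pu_char hne h1] at *
  generalize (φ p).1 = s at *
  generalize p.1 = t at *
  cases s <;> cases t <;> simp_all

lemma rigid (hne : g1 ≠ g2) (h1 : g1 ≠ 1) (h2 : g2 ≠ 1)
    (hgen : Subgroup.closure {g1, g2} = ⊤) (φ : gr g1 g2 ≃g gr g1 g2) :
    ∃ k : G, ∀ i g, φ (i, g) = (i, k * g) := by
  have ht := type_eq hne h1 φ
  have hex : ∀ i g, ∃ h, φ (i, g) = (i, h) := fun i g => ⟨(φ (i, g)).2, Prod.ext (ht _) rfl⟩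
  choose f hf using hex
  have hadj : ∀ i g j h, (gr g1 g2).Adj (i, g) (j, h) → (gr g1 g2).Adj (i, f i g) (j, f j h) := by
    intro i g j h H
    rw [← hf, ← hf]; exact φ.map_adj_iff.2 H
  have hu : ∀ g, f .u g = f .x g := fun g => by
    simpa [adj_x] using hadj .x g .u g (by simp [adj_x])
  have hv : ∀ g, f .v g = f .x g := fun g => by
    simpa [adj_x] using hadj .x g .v g (by simp [adj_x])
  have ha : ∀ g, f .a g = f .x g := fun g => by
    simpa [adj_u, hu] using hadj .u g .a g (by simp [adj_u])
  have hb : ∀ g, f .b g = f .x g := fun g => by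
    simpa [adj_a, ha] using hadj .a g .b g (by simp [adj_a])
  have hc : ∀ g, f .c g = f .x g := fun g => by
    simpa [adj_v, hv] using hadj .v g .c g (by simp [adj_v])
  have hinj : Function.Injective (f .x) := by
    intro g h e
    have : φ (.x, g) = φ (.x, h) := by rw [hf, hf, e]
    simpa using φ.injective this
  have s1 : ∀ g, f .x (g * g1) = f .x g * g1 := fun g => by
    simpa [adj_x, ha] using hadj .x g .a (g * g1) (by simp [adj_x])
  have s2 : ∀ g, f .x (g * g2) = f .x g * g2 := fun g => by
    have := hadj .c g .b (g * g2) (by simp [adj_c])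
    simp [adj_c, hb, hc] at this
    rcases this with h | h
    · exact absurd (hinj h) (by simpa using h2)
    · exact h
  have s : ∀ s : G, ∀ g, f .x (g * s) = f .x g * s := by
    intro s
    have hs : s ∈ Subgroup.closure {g1, g2} := by rw [hgen]; trivial
    induction hs using Subgroup.closure_induction with
    | mem y hy => rcases hy with rfl | rfl <;> assumption
    | one => simp
    | mul y z _ _ hy hz => intro g; rw [← mul_assoc, hz, hy, mul_assoc]
    | inv y _ hy =>
      intro g
      rw [eq_mul_inv_iff_mul_eq, ← hy]; simp
  refine ⟨f .x 1, fun i g => ?_⟩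
  rw [hf]
  have := s g 1
  rw [one_mul] at this
  cases i <;> simp [hu, hv, ha, hb, hc, this]

def act (g1 g2 k : G) : gr g1 g2 ≃g gr g1 g2 where
  toEquiv := (Equiv.refl T).prodCongr (Equiv.mulLeft k)
  map_rel_iff' := by
    rintro ⟨i, g⟩ ⟨j, h⟩
    cases i <;> cases j <;> simp [gr, adj, mul_assoc]

lemma act_apply (k : G) (i : T) (g : G) : act g1 g2 k (i, g) = (i, k * g) := rfl

noncomputable def autEquiv (hne : g1 ≠ g2) (h1 : g1 ≠ 1) (h2 : g2 ≠ 1)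
    (hgen : Subgroup.closure {g1, g2} = ⊤) : G ≃* (gr g1 g2 ≃g gr g1 g2) :=
  MulEquiv.ofBijective
    ({ toFun := act g1 g2
       map_one' := by ext ⟨i, g⟩ <;> simp [act_apply]
       map_mul' := fun k l => by
        ext ⟨i, g⟩ <;> simp [act_apply, mul_assoc] } : G →* (gr g1 g2 ≃g gr g1 g2)) (by
    constructor
    · intro k l h
      have h' : act g1 g2 k (.x, 1) = act g1 g2 l (.x, 1) := DFunLike.congr_fun h _
      simpa [act_apply] using h'
    · intro φ
      obtain ⟨k, hk⟩ := rigid hne h1 h2 hgen φ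
      refine ⟨k, ?_⟩
      apply RelIso.ext
      rintro ⟨i, g⟩
      exact (hk i g).symm)
end

def conj {V W : Type*} {A : SimpleGraph V} {B : SimpleGraph W} (e : A ≃g B) :
    (B ≃g B) ≃* (A ≃g A) where
  toFun f := (e.trans f).trans e.symm
  invFun f := (e.symm.trans f).trans e
  left_inv f := by apply RelIso.ext; intro x; simp
  right_inv f := by apply RelIso.ext; intro x; simp
  map_mul' f g := by apply RelIso.ext; intro x; simp

end CubicSix

open scoped Classical in
/-- For a finite group `G` generated by two distinct non-identity elements `g1, g2`,
there is a cubic (3-regular) finite simple graph on exactly `6 * |G|` vertices whose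
automorphism group is isomorphic to `G`. -/
theorem exists_cubic_graph_on_six_card_aut_mulEquiv
    (G : Type*) [Group G] [Fintype G] (g1 g2 : G)
    (hne : g1 ≠ g2) (h1 : g1 ≠ 1) (h2 : g2 ≠ 1)
    (hgen : Subgroup.closure {g1, g2} = ⊤) :
    ∃ Γ : SimpleGraph (Fin (6 * Fintype.card G)),
      Γ.IsRegularOfDegree 3 ∧ Nonempty ((Γ ≃g Γ) ≃* G) := by
  have hT : Fintype.card CubicSix.T = 6 := rfl
  have hcard : Fintype.card (CubicSix.T × G) = 6 * Fintype.card G := by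
    rw [Fintype.card_prod, hT]
  let e : Fin (6 * Fintype.card G) ≃ CubicSix.T × G := (Fintype.equivFinOfCardEq hcard).symm
  let A := CubicSix.gr g1 g2
  let i : A.comap e ≃g A := SimpleGraph.Iso.comap e A
  refine ⟨A.comap e, ?_, ⟨(CubicSix.conj i.symm).trans
    (CubicSix.autEquiv hne h1 h2 hgen).symm⟩⟩
  intro p
  rw [← SimpleGraph.card_neighborSet_eq_degree, ← Nat.card_eq_fintype_card]
  have := CubicSix.ncard_nbr (g1 := g1) h2 (e p)
  rw [← Nat.card_coe_set_eq] at this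
  rw [← this]
  exact Nat.card_congr (i.mapNeighborSet p)
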